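/- Let p ≥ 2 and let G = K_{n_1, …, n_p} be the complete multipartite graph with parts V_1, …, V_p of sizes n_1, …, n_p ≥ 1. Let S be a set of m ≥ 2 vertices of G. Then the Steiner distance of S in G equals m if S is contained in a single part V_i, and equals m − 1 if S meets at least two parts. -/

import Mathlib

/-!
A connected graph on `k` vertices has at least `k - 1` edges, and a spanning tree has exactly that
many. So the Steiner distance of `S` is one less than the least size of a vertex set `W ⊇ S`
inducing a connected subgraph. In a complete multipartite graph, a set with at least two elements
induces a connected subgraph iff it meets two parts: such an `S` is itself optimal, while an `S`
inside one part needs exactly one further vertex.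
-/

open SimpleGraph

/-- The *Steiner distance* of a set `S` of vertices of `G`: the minimum number of edges
of a connected subgraph of `G` containing all vertices of `S`. -/
noncomputable def steinerDist {V : Type*} (G : SimpleGraph V) (S : Set V) : ℕ :=
  sInf {n | ∃ T : G.Subgraph, T.Connected ∧ S ⊆ T.verts ∧ T.edgeSet.ncard = n}

section SteinerDist

variable {V : Type*} {G : SimpleGraph V} {S W : Set V} {v : V}

theorem ncard_verts_le_ncard_edgeSet_add_one {T : G.Subgraph} (hT : T.Connected) :
    T.verts.ncard ≤ T.edgeSet.ncard + 1 := by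
  rw [← T.image_coe_edgeSet_coe,
    Set.ncard_image_of_injective _ (Sym2.map.injective Subtype.val_injective)]
  exact hT.coe.card_vert_le_card_edgeSet_add_one

theorem exists_connected_verts_eq_ncard_edgeSet_add_one_eq {K : G.Subgraph} (hK : K.Connected)
    (hfin : K.verts.Finite) :
    ∃ T : G.Subgraph, T.Connected ∧ T.verts = K.verts ∧
      T.edgeSet.ncard + 1 = K.verts.ncard := by
  have : Finite K.verts := hfin
  obtain ⟨H, hle, hH⟩ := hK.coe.exists_isTree_le
  have hcard : H.edgeSet.ncard + 1 = K.verts.ncard := (isTree_iff_connected_and_card.mp hH).2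
  refine ⟨Subgraph.coeSubgraph (toSubgraph H hle), (hH.connected.toSubgraph hle).coeSubgraph,
    ?_, ?_⟩
  · simp [toSubgraph]
  · rwa [Subgraph.edgeSet_map,
      Set.ncard_image_of_injective _ (Sym2.map.injective K.hom_injective)]

theorem steinerDist_add_one_le_ncard (hW : W.Finite) (hconn : (G.induce W).Connected)
    (hSW : S ⊆ W) : steinerDist G S + 1 ≤ W.ncard := by
  obtain ⟨T, hT, hverts, hcard⟩ :=
    exists_connected_verts_eq_ncard_edgeSet_add_one_eq (connected_induce_iff.mp hconn) hW
  calc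
    steinerDist G S + 1 ≤ T.edgeSet.ncard + 1 :=
      Nat.succ_le_succ (Nat.sInf_le ⟨T, hT, hverts ▸ hSW, rfl⟩)
    _ = W.ncard := hcard

theorem exists_induce_connected_ncard_le_steinerDist_add_one
    (hW : (G.induce W).Connected) (hSW : S ⊆ W) :
    ∃ U, S ⊆ U ∧ (G.induce U).Connected ∧ U.ncard ≤ steinerDist G S + 1 := by
  obtain ⟨T, hT, hST, hcard⟩ : steinerDist G S ∈
      {n | ∃ T : G.Subgraph, T.Connected ∧ S ⊆ T.verts ∧ T.edgeSet.ncard = n} :=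
    Nat.sInf_mem ⟨_, (⊤ : G.Subgraph).induce W, connected_induce_iff.mp hW, hSW, rfl⟩
  exact ⟨T.verts, hST, hT.induce_verts, hcard ▸ ncard_verts_le_ncard_edgeSet_add_one hT⟩

theorem steinerDist_add_one_eq_ncard_of_induce_connected [Finite V]
    (hS : (G.induce S).Connected) : steinerDist G S + 1 = S.ncard := by
  obtain ⟨U, hSU, -, hcard⟩ :=
    exists_induce_connected_ncard_le_steinerDist_add_one hS subset_rfl
  exact (steinerDist_add_one_le_ncard S.toFinite hS subset_rfl).antisymm
    ((Set.ncard_le_ncard hSU).trans hcard)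

theorem steinerDist_eq_ncard_of_induce_insert_connected [Finite V]
    (hS : ¬(G.induce S).Connected) (hv : (G.induce (insert v S)).Connected) :
    steinerDist G S = S.ncard := by
  have hle : steinerDist G S + 1 ≤ S.ncard + 1 :=
    (steinerDist_add_one_le_ncard (Set.toFinite _) hv (Set.subset_insert v S)).trans
      (Set.ncard_insert_le v S)
  obtain ⟨U, hSU, hU, hcard⟩ :=
    exists_induce_connected_ncard_le_steinerDist_add_one hv (Set.subset_insert v S)
  have hlt : S.ncard < U.ncard :=
    Set.ncard_lt_ncard (hSU.ssubset_of_ne fun h => hS (h ▸ hU))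
  omega

end SteinerDist

theorem induce_completeMultipartiteGraph_connected_iff {ι : Type*} {F : ι → Type*}
    {W : Set ((i : ι) × F i)} (hW : W.Nontrivial) :
    ((completeMultipartiteGraph F).induce W).Connected ↔ ∃ u ∈ W, ∃ v ∈ W, u.1 ≠ v.1 := by
  constructor
  · intro h
    have : Nontrivial W := hW.coe_sort
    obtain ⟨u, hu⟩ := hW.nonempty
    obtain ⟨v, huv⟩ := h.preconnected.exists_adj_of_nontrivial ⟨u, hu⟩
    exact ⟨u, hu, v, v.2, huv⟩
  · rintro ⟨u, hu, v, hv, huv⟩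
    have reachable_of_ne (a b : W) (hab : a.1.1 ≠ b.1.1) :
        ((completeMultipartiteGraph F).induce W).Reachable a b := Adj.reachable hab
    rw [connected_iff_exists_forall_reachable]
    refine ⟨⟨u, hu⟩, fun w => ?_⟩
    by_cases huw : u.1 = w.1.1
    · exact (reachable_of_ne _ ⟨v, hv⟩ huv).trans (reachable_of_ne _ _ (huw ▸ huv.symm))
    · exact reachable_of_ne _ _ huw

theorem steinerDist_completeMultipartite_general {ι : Type*} [Finite ι] [Nontrivial ι]
    {F : ι → Type*} [∀ i, Finite (F i)] [∀ i, Nonempty (F i)]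
    {S : Set ((i : ι) × F i)} (hS : S.Nontrivial) :
    ((∃ i, ∀ v ∈ S, v.1 = i) → steinerDist (completeMultipartiteGraph F) S = S.ncard) ∧
      ((∃ u ∈ S, ∃ v ∈ S, u.1 ≠ v.1) →
        steinerDist (completeMultipartiteGraph F) S = S.ncard - 1) := by
  constructor
  · rintro ⟨i, hi⟩
    obtain ⟨j, hji⟩ := exists_ne i
    let x : (i : ι) × F i := ⟨j, Classical.arbitrary (F j)⟩
    obtain ⟨u, hu⟩ := hS.nonempty
    refine steinerDist_eq_ncard_of_induce_insert_connected (v := x) ?_ ?_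
    · rw [induce_completeMultipartiteGraph_connected_iff hS]
      rintro ⟨a, ha, b, hb, hab⟩
      exact hab ((hi a ha).trans (hi b hb).symm)
    · rw [induce_completeMultipartiteGraph_connected_iff (hS.mono (Set.subset_insert _ _))]
      exact ⟨x, Set.mem_insert x S, u, Set.mem_insert_of_mem _ hu, (hi u hu).symm ▸ hji⟩
  · intro h
    exact Nat.eq_sub_of_add_eq (steinerDist_add_one_eq_ncard_of_induce_connected
      ((induce_completeMultipartiteGraph_connected_iff hS).mpr h))

/-- Let `p ≥ 2` and let `G = K_{n 1, …, n p}` be the complete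
multipartite graph with parts `V 1, …, V p` of sizes `n 1, …, n p ≥ 1` (realized with
part `V i = Fin (n i)`).  Let `S` be a set of `m ≥ 2` vertices of `G`.  Then the Steiner
distance of `S` in `G` equals `m` if `S` is contained in a single part, and equals
`m − 1` if `S` meets at least two parts. -/
theorem steinerDist_completeMultipartite {p : ℕ} (hp : 2 ≤ p)
    (n : Fin p → ℕ) (hn : ∀ i, 1 ≤ n i)
    (S : Finset ((i : Fin p) × Fin (n i))) (m : ℕ) (hm : 2 ≤ m) (hcard : S.card = m) :
    ((∃ i, ∀ v ∈ S, v.1 = i) →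
        steinerDist (completeMultipartiteGraph fun i => Fin (n i))
          (S : Set ((i : Fin p) × Fin (n i))) = m) ∧
      ((∃ u ∈ S, ∃ v ∈ S, u.1 ≠ v.1) →
        steinerDist (completeMultipartiteGraph fun i => Fin (n i))
          (S : Set ((i : Fin p) × Fin (n i))) = m - 1) := by
  have : Nontrivial (Fin p) := Fin.nontrivial_iff_two_le.mpr hp
  have (i : Fin p) : Nonempty (Fin (n i)) := ⟨⟨0, hn i⟩⟩
  have hS : S.Nontrivial := Finset.one_lt_card_iff_nontrivial.mp (hcard ▸ hm)
  rw [← hcard, ← Set.ncard_coe_finset]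
  exact steinerDist_completeMultipartite_general hS
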